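/- Let G be the group of isometries of the hyperbolic plane generated by reflections in the sides of a triangle with angles π/a, π/b, π/c where 2 ≤ a ≤ b ≤ c and 1/a + 1/b + 1/c < 1. Then G acts properly discontinuously and cocompactly on the hyperbolic plane; consequently the triangle group T_{a,b,c} is a cocompact lattice in the isometry group of the hyperbolic plane. -/

import Mathlib

open UpperHalfPlane

/-- The relations of the `(a,b,c)` triangle group
`⟨x, y, z ∣ x² = y² = z² = (xy)^a = (yz)^b = (zx)^c = 1⟩`. -/
def triangleRels (a b c : ℕ) : Set (FreeGroup (Fin 3)) :=
  {FreeGroup.of 0 ^ 2, FreeGroup.of 1 ^ 2, FreeGroup.of 2 ^ 2,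
    (FreeGroup.of 0 * FreeGroup.of 1) ^ a,
    (FreeGroup.of 1 * FreeGroup.of 2) ^ b,
    (FreeGroup.of 2 * FreeGroup.of 0) ^ c}

/-!
Place three unit vectors in Minkowski space with pairings `-cos (π / m)` and let the Coxeter group
act by the corresponding reflections of the hyperbolic plane. For an interior point `x` of the
triangle, the signed heights of the points `w⁻¹ x` over the three sides transform like the
coordinates of a vector in the geometric representation, so by Tits every `w ≠ 1` moves `x` to the
negative side of some side of the triangle. The orbit of `x` is therefore separated from `x`, which
makes the action faithful and properly discontinuous. Moving `z` by the group element that brings it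
closest to `x` puts it in the triangle, since otherwise a reflection in a side would bring it still
closer. Finally the triangle is compact: with `A` the adjugate of the Gram matrix `G` of the normals
and `s` the vector of heights over the sides, `-det G * cosh (dist z w) = s(z)ᵀ A s(w)`, and `A` has
nonnegative entries and positive diagonal. On the triangle `s` is nonnegative, so `w = z` bounds the
heights, and then a fixed `w` bounds the distance.
-/

section ChebyshevPositivity

open Real Polynomial.Chebyshev

lemma U_eval_cos_pi_div_pos {m k : ℕ} (h : m ≠ 0 → k + 1 < m) :
    0 < (U ℝ k).eval (cos (π / m)) := by
  rcases eq_or_ne m 0 with rfl | hm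
  · simp only [Nat.cast_zero, div_zero, cos_zero, U_eval_one, Int.cast_natCast]
    positivity
  · have hkm : (k : ℝ) + 1 < m := mod_cast h hm
    have hsin : 0 < sin (π / m) :=
      sin_pos_of_pos_of_lt_pi (by positivity)
        (div_lt_self pi_pos (by linarith [k.cast_nonneg (α := ℝ)]))
    refine pos_of_mul_pos_left ?_ hsin.le
    rw [U_real_cos, Int.cast_natCast]
    refine sin_pos_of_pos_of_lt_pi (by positivity) ?_
    rw [mul_div_left_comm]
    exact mul_lt_of_lt_one_right pi_pos ((div_lt_one (by positivity)).2 hkm)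

lemma U_eval_cos_pi_div_nonneg {m k : ℕ} (h : m ≠ 0 → k < m) :
    0 ≤ (U ℝ k).eval (cos (π / m)) := by
  by_cases hlt : m ≠ 0 → k + 1 < m
  · exact (U_eval_cos_pi_div_pos hlt).le
  obtain rfl : m = k + 1 := by
    push Not at hlt
    have := h hlt.1
    omega
  rcases Nat.eq_zero_or_pos k with rfl | hk
  · simp
  · have hsin : 0 < sin (π / (k + 1 : ℕ)) :=
      sin_pos_of_pos_of_lt_pi (by positivity) (div_lt_self pi_pos (by norm_cast; omega))
    refine nonneg_of_mul_nonneg_left (b := sin (π / (k + 1 : ℕ))) ?_ hsin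
    rw [U_real_cos, Int.cast_natCast, ← Nat.cast_succ, mul_div_cancel₀ _ (by positivity), sin_pi]

end ChebyshevPositivity

section RootFamilies

open Real CoxeterSystem Polynomial.Chebyshev

variable {B W : Type*} [Group W] {M : CoxeterMatrix B} {cs : CoxeterSystem M W}

lemma length_mul_alternatingWord_le (cs : CoxeterSystem M W) (v : W) (i j : B) (k : ℕ) :
    cs.length (v * cs.wordProd (alternatingWord i j k)) ≤ cs.length v + k := by
  have h := cs.length_wordProd_le (alternatingWord i j k)
  rw [length_alternatingWord] at h
  exact (cs.length_mul_le _ _).trans (Nat.add_le_add_left h _)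

lemma exists_maximal_alternatingWord_suffix (cs : CoxeterSystem M W) (w : W) (i j : B) :
    ∃ v k, w = v * cs.wordProd (alternatingWord i j k) ∧ cs.length w = cs.length v + k ∧
      ¬cs.IsRightDescent v (if Even k then j else i) := by
  classical
  let IsSuffix (k : ℕ) : Prop :=
    ∃ v, w = v * cs.wordProd (alternatingWord i j k) ∧ cs.length w = cs.length v + k
  have hzero : IsSuffix 0 := ⟨w, by simp [alternatingWord], rfl⟩
  obtain ⟨v, hw, hlen⟩ : IsSuffix (Nat.findGreatest IsSuffix (cs.length w)) :=
    Nat.findGreatest_spec (Nat.zero_le _) hzero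
  set k := Nat.findGreatest IsSuffix (cs.length w)
  refine ⟨v, k, hw, hlen, fun hdesc ↦ ?_⟩
  rw [cs.isRightDescent_iff] at hdesc
  refine Nat.findGreatest_is_greatest (P := IsSuffix) k.lt_succ_self (by omega)
    ⟨v * cs.simple (if Even k then j else i), ?_, by omega⟩
  rw [alternatingWord_succ', cs.wordProd_cons, ← mul_assoc, cs.simple_mul_simple_cancel_right, ← hw]

lemma not_isRightDescent_of_length_mul_alternatingWord {v : W} {i j : B} {k : ℕ}
    (h : cs.length (v * cs.wordProd (alternatingWord i j (k + 1))) = cs.length v + (k + 1)) :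
    ¬cs.IsRightDescent v (if Even k then j else i) := by
  intro hdesc
  rw [alternatingWord_succ', cs.wordProd_cons, ← mul_assoc] at h
  have hle := length_mul_alternatingWord_le cs (v * cs.simple (if Even k then j else i)) i j k
  have := cs.isRightDescent_iff.1 hdesc
  omega

lemma alternatingWord_length_lt_of_not_isRightDescent {v : W} {i j : B} {k : ℕ}
    (hlen : cs.length (v * cs.wordProd (alternatingWord i j k)) = cs.length v + k)
    (hi : ¬cs.IsRightDescent (v * cs.wordProd (alternatingWord i j k)) i) (hM : M i j ≠ 0) :
    k < M i j := by
  have hred : cs.IsReduced (alternatingWord i j k) := by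
    have h₁ := cs.length_mul_le v (cs.wordProd (alternatingWord i j k))
    have h₂ := cs.length_wordProd_le (alternatingWord i j k)
    rw [length_alternatingWord] at h₂
    rw [CoxeterSystem.IsReduced, length_alternatingWord]
    omega
  have hle : k ≤ M i j := not_lt.1 fun hlt ↦ cs.not_isReduced_alternatingWord i j hM hlt hred
  refine hle.lt_of_ne fun hk ↦ hi ?_
  obtain ⟨m, rfl⟩ := Nat.exists_eq_succ_of_ne_zero (hk ▸ hM)
  have hbraid : cs.wordProd (alternatingWord i j (m + 1)) =
      cs.wordProd (alternatingWord i j m) * cs.simple i := by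
    have := cs.wordProd_braidWord_eq i j
    rw [braidWord, braidWord, M.symmetric j i, ← hk] at this
    rw [this, Nat.succ_eq_add_one, alternatingWord_succ, cs.wordProd_concat]
  have hshort := length_mul_alternatingWord_le cs v i j m
  rw [CoxeterSystem.IsRightDescent, hlen, hbraid, mul_assoc, cs.simple_mul_simple_cancel_right]
  omega

lemma exists_eq_mul_alternatingWord (cs : CoxeterSystem M W) {w : W} {i : B} (j : B)
    (hi : ¬cs.IsRightDescent w i) :
    ∃ v k, w = v * cs.wordProd (alternatingWord i j k) ∧ cs.length w = cs.length v + k ∧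
      ¬cs.IsRightDescent v i ∧ ¬cs.IsRightDescent v j ∧ (M i j ≠ 0 → k < M i j) := by
  obtain ⟨v, k, rfl, hlen, hnext⟩ := exists_maximal_alternatingWord_suffix cs w i j
  refine ⟨v, k, rfl, hlen, and_assoc.1 ⟨?_, ?_⟩⟩
  · cases k with
    | zero => exact ⟨by simpa [alternatingWord] using hi, by simpa using hnext⟩
    | succ k =>
      have hfirst := not_isRightDescent_of_length_mul_alternatingWord hlen
      by_cases hk : Even k <;> simp_all [Nat.even_add_one]
  · exact alternatingWord_length_lt_of_not_isRightDescent hlen hi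

/-- A family of functions on a Coxeter group that transforms under right multiplication by the
simple reflections as the coordinates of a vector in the geometric representation do: `f i w` plays
the role of the pairing of `w⁻¹ x` with the simple root `αᵢ`, for a fixed vector `x`. An infinite
entry of the Coxeter matrix is encoded as `M i j = 0` and contributes the coefficient
`2 cos (π / 0) = 2`. -/
def IsRootFamily (cs : CoxeterSystem M W) (f : B → W → ℝ) : Prop :=
  ∀ i j w, f j (w * cs.simple i) = f j w + 2 * cos (π / M i j) * f i w

namespace IsRootFamily

variable {f : B → W → ℝ}

lemma apply_mul_simple_self (hf : IsRootFamily cs f) (i : B) (w : W) :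
    f i (w * cs.simple i) = -f i w := by
  rw [hf, M.diagonal, Nat.cast_one, div_one, cos_pi]
  ring

lemma apply_mul_alternatingWord_add_two (hf : IsRootFamily cs f) (i j : B) (w : W) (k : ℕ) :
    f i (w * cs.wordProd (alternatingWord i j (k + 2))) =
      2 * cos (π / M i j) * f j (w * cs.wordProd (alternatingWord j i (k + 1))) -
        f i (w * cs.wordProd (alternatingWord i j k)) := by
  simp only [alternatingWord_succ, cs.wordProd_concat, ← mul_assoc]
  rw [hf j i, hf.apply_mul_simple_self i, M.symmetric j i]
  ring

lemma apply_mul_alternatingWord (hf : IsRootFamily cs f) (i j : B) (w : W) (k : ℕ) :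
    f i (w * cs.wordProd (alternatingWord i j k)) =
      (U ℝ k).eval (cos (π / M i j)) * f (if Even k then i else j) w +
        (U ℝ (k - 1)).eval (cos (π / M i j)) * f (if Even k then j else i) w := by
  induction k using Nat.twoStepInduction generalizing i j with
  | zero => simp [alternatingWord]
  | one => simp [alternatingWord, hf j i, M.symmetric j i, add_comm]
  | more k ih₀ ih₁ =>
    have hU : (U ℝ (k + 1)).eval (cos (π / M i j)) = 2 * cos (π / M i j) *
        (U ℝ k).eval (cos (π / M i j)) - (U ℝ (k - 1)).eval (cos (π / M i j)) := by
      simpa using congrArg (Polynomial.eval (cos (π / M i j))) (U_add_one ℝ k)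
    rw [hf.apply_mul_alternatingWord_add_two, ih₀, ih₁, M.symmetric j i]
    push_cast
    rw [add_sub_cancel_right, show (k : ℤ) + 2 - 1 = k + 1 by ring, U_add_two]
    simp only [Nat.even_add_one, not_not, ite_not, Polynomial.eval_sub, Polynomial.eval_mul,
      Polynomial.eval_ofNat, Polynomial.eval_X]
    linear_combination (-f (if Even k then j else i) w) * hU

lemma apply_mul_alternatingWord_pos (hf : IsRootFamily cs f) {i j : B} {w : W} {k : ℕ}
    (hi : 0 < f i w) (hj : 0 < f j w) (hk : M i j ≠ 0 → k < M i j) :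
    0 < f i (w * cs.wordProd (alternatingWord i j k)) := by
  cases k with
  | zero => simpa [alternatingWord] using hi
  | succ k =>
    have hfirst : 0 < f (if Even (k + 1) then i else j) w := by split_ifs <;> assumption
    have hsecond : 0 < f (if Even (k + 1) then j else i) w := by split_ifs <;> assumption
    rw [hf.apply_mul_alternatingWord, Nat.cast_succ, add_sub_cancel_right]
    exact add_pos_of_nonneg_of_pos (mul_nonneg (U_eval_cos_pi_div_nonneg hk) hfirst.le)
      (mul_pos (U_eval_cos_pi_div_pos hk) hsecond)

theorem pos_of_not_isRightDescent (hf : IsRootFamily cs f) (hone : ∀ i, 0 < f i 1) {w : W} {i : B}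
    (hi : ¬cs.IsRightDescent w i) : 0 < f i w := by
  induction hn : cs.length w using Nat.strong_induction_on generalizing w i with
  | _ n ih =>
    rcases eq_or_ne w 1 with rfl | hw
    · exact hone i
    obtain ⟨j, hj⟩ := cs.exists_rightDescent_of_ne_one hw
    -- Split `w = v u` with `u` in the dihedral subgroup of `i` and `j`, and `v` minimal in its
    -- coset: induction applies to the shorter `v`, and on `u` the claim is positivity of the
    -- Chebyshev polynomials.
    obtain ⟨v, k, rfl, hlen, hvi, hvj, hk⟩ := exists_eq_mul_alternatingWord cs j hi
    have hk₀ : k ≠ 0 := by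
      rintro rfl
      exact hvj (by simpa [alternatingWord] using hj)
    have hlt : cs.length v < n := by omega
    exact hf.apply_mul_alternatingWord_pos (ih _ hlt hvi rfl) (ih _ hlt hvj rfl) hk

theorem exists_neg (hf : IsRootFamily cs f) (hone : ∀ i, 0 < f i 1) {w : W} (hw : w ≠ 1) :
    ∃ i, f i w < 0 := by
  obtain ⟨i, hi⟩ := cs.exists_rightDescent_of_ne_one hw
  rw [cs.isRightDescent_iff_not_isRightDescent_mul] at hi
  have hpos := hf.pos_of_not_isRightDescent hone hi
  rw [hf.apply_mul_simple_self, neg_pos] at hpos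
  exact ⟨i, hpos⟩

end IsRootFamily

end RootFamilies

section SeparatedOrbits

variable {W X : Type*} [Group W] [PseudoMetricSpace X] {ρ : W →* (X ≃ᵢ X)} {x : X} {ε : ℝ}

lemma injective_of_separated_orbit (hε : 0 < ε) (hsep : ∀ w, w ≠ 1 → ε ≤ dist (ρ w x) x) :
    Function.Injective ρ := by
  refine (injective_iff_map_eq_one ρ).2 fun w hw ↦ ?_
  by_contra hne
  have hle := hsep w hne
  rw [hw, IsometryEquiv.coe_one, id, dist_self] at hle
  exact hε.not_ge hle

variable [ProperSpace X]

lemma finite_setOf_dist_orbit_le (hε : 0 < ε) (hsep : ∀ w, w ≠ 1 → ε ≤ dist (ρ w x) x) (R : ℝ) :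
    {w | dist (ρ w x) x ≤ R}.Finite := by
  obtain ⟨t, ht, hcover⟩ := Metric.totallyBounded_iff.1
    (isCompact_closedBall x R).totallyBounded (ε / 2) (half_pos hε)
  have hnear (w : {w | dist (ρ w x) x ≤ R}) : ∃ y : t, dist (ρ w x) y < ε / 2 := by
    simpa using hcover (Metric.mem_closedBall.2 w.2)
  choose y hy using hnear
  have := ht.to_subtype
  refine Set.finite_coe_iff.1 (Finite.of_injective y fun v w hvw ↦ ?_)
  by_contra hne
  have hle : ε ≤ dist (ρ v x) (ρ w x) := by
    have hne_one : (w : W)⁻¹ * v ≠ 1 := fun h ↦ hne (Subtype.ext (inv_mul_eq_one.1 h).symm)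
    rw [← mul_inv_cancel_left (w : W) v, map_mul, IsometryEquiv.mul_apply, (ρ w).dist_eq]
    exact hsep _ hne_one
  refine hle.not_gt ?_
  calc dist (ρ v x) (ρ w x) ≤ dist (ρ v x) (y v) + dist (ρ w x) (y v) := dist_triangle_right _ _ _
    _ < ε / 2 + ε / 2 := add_lt_add (hy v) (hvw ▸ hy w)
    _ = ε := add_halves ε

lemma finite_setOf_image_inter_nonempty (hε : 0 < ε) (hsep : ∀ w, w ≠ 1 → ε ≤ dist (ρ w x) x)
    {K : Set X} (hK : IsCompact K) : {w | (ρ w '' K ∩ K).Nonempty}.Finite := by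
  obtain ⟨r, hr⟩ := hK.isBounded.subset_closedBall x
  refine (finite_setOf_dist_orbit_le hε hsep (r + r)).subset ?_
  rintro w ⟨_, ⟨z, hz, rfl⟩, hwz⟩
  calc dist (ρ w x) x ≤ dist (ρ w x) (ρ w z) + dist (ρ w z) x := dist_triangle _ _ _
    _ ≤ r + r := by
      rw [(ρ w).dist_eq, dist_comm x z]
      exact add_le_add (hr hz) (hr hwz)

lemma exists_forall_dist_le_of_separated_orbit (hε : 0 < ε)
    (hsep : ∀ w, w ≠ 1 → ε ≤ dist (ρ w x) x) (z : X) :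
    ∃ w, ∀ v, dist (ρ w z) x ≤ dist (ρ v z) x := by
  have hfin : {w | dist (ρ w z) x ≤ dist z x}.Finite := by
    refine (finite_setOf_dist_orbit_le hε hsep (dist x z + dist z x)).subset fun w hw ↦ ?_
    calc dist (ρ w x) x ≤ dist (ρ w x) (ρ w z) + dist (ρ w z) x := dist_triangle _ _ _
      _ ≤ dist x z + dist z x := by rw [(ρ w).dist_eq]; exact add_le_add_right hw _
  obtain ⟨w, hw, hmin⟩ := Set.exists_min_image _ (fun w ↦ dist (ρ w z) x) hfin ⟨1, by simp⟩
  refine ⟨w, fun v ↦ ?_⟩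
  rcases le_total (dist (ρ v z) x) (dist z x) with hv | hv
  · exact hmin v hv
  · exact hw.trans hv

end SeparatedOrbits

section DihedralRelations

open Real Polynomial.Chebyshev

lemma S_eval_two_mul_cos_pi_div_eq_zero {p : ℕ} (hp : 2 ≤ p) :
    (S ℝ (p - 1)).eval (2 * cos (π / p)) = 0 := by
  have hsin : sin (π / p) ≠ 0 :=
    (sin_pos_of_pos_of_lt_pi (by positivity) (div_lt_self pi_pos (mod_cast hp))).ne'
  refine (mul_eq_zero_iff_right hsin).1 ?_
  rw [S_two_mul_real_cos]
  push_cast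
  rw [sub_add_cancel, mul_div_cancel₀ _ (by positivity), sin_pi]

lemma S_eval_add_S_eval_two_mul_cos_eq_zero {p : ℕ} (hp : 1 ≤ p) :
    (S ℝ p).eval (2 * cos (2 * π / (2 * p + 1))) +
      (S ℝ (p - 1)).eval (2 * cos (2 * π / (2 * p + 1))) = 0 := by
  have hp' : (1 : ℝ) ≤ p := mod_cast hp
  set θ := 2 * π / (2 * p + 1) with hθ
  have hθπ : (p + 1) * θ = 2 * π - p * θ := by
    rw [hθ]
    field_simp
    ring
  have hsin : sin θ ≠ 0 := by
    refine (sin_pos_of_pos_of_lt_pi (by positivity) ?_).ne'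
    rw [hθ, div_lt_iff₀ (by positivity)]
    nlinarith [pi_pos]
  refine (mul_eq_zero_iff_right hsin).1 ?_
  rw [add_mul, S_two_mul_real_cos, S_two_mul_real_cos]
  push_cast
  rw [sub_add_cancel, hθπ, sin_two_pi_sub, neg_add_cancel]

variable {V : Type*} [AddCommGroup V] [Module ℝ V] {x y : V} {f g : Module.Dual ℝ V}

lemma reflection_mul_reflection_pow_eq_one (hf : f x = 2) (hg : g y = 2) {m : ℕ} (hm : 2 ≤ m)
    (hfy : f y = -2 * cos (π / m)) (hgx : g x = -2 * cos (π / m)) :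
    (Module.reflection hf * Module.reflection hg) ^ m = 1 := by
  have ht : 2 * cos (2 * π / m) = f y * g x - 2 := by
    rw [hfy, hgx, mul_div_assoc, cos_two_mul]
    ring
  ext z
  rw [Module.reflection_mul_reflection_pow_apply hf hg m z _ ht, LinearEquiv.coe_one, id]
  rcases m.even_or_odd' with ⟨p, rfl | rfl⟩
  · rw [show ((2 * p : ℕ) - 2 : ℤ) / 2 = p - 1 by omega,
      show ((2 * p : ℕ) - 1 : ℤ) / 2 = p - 1 by omega,
      show ((2 * p : ℕ) - 3 : ℤ) / 2 = p - 2 by omega, show ((2 * p : ℕ) : ℤ) / 2 = p by omega]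
    rcases (show 1 ≤ p by omega).eq_or_lt with rfl | hp
    · have hcos : cos (π / (2 * 1 : ℕ)) = 0 := by rw [mul_one, Nat.cast_ofNat, cos_pi_div_two]
      rw [hcos, mul_zero] at hfy hgx
      simp only [hfy, hgx, Nat.cast_one, mul_one, Nat.cast_ofNat, sub_self, Int.reduceSub, S_zero,
        S_one, S_neg_one, Polynomial.eval_one, Polynomial.eval_X, Polynomial.eval_zero,
        mul_div_cancel_left₀ π two_ne_zero, cos_pi]
      module
    · have hS := S_eval_two_mul_cos_pi_div_eq_zero hp
      push_cast
      rw [mul_div_mul_left _ _ two_ne_zero, hS]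
      simp only [zero_mul, zero_smul, add_zero]
  · have hS := S_eval_add_S_eval_two_mul_cos_eq_zero (show 1 ≤ p by omega)
    rw [show ((2 * p + 1 : ℕ) - 2 : ℤ) / 2 = p - 1 by omega,
      show ((2 * p + 1 : ℕ) - 1 : ℤ) / 2 = p by omega,
      show ((2 * p + 1 : ℕ) - 3 : ℤ) / 2 = p - 1 by omega,
      show ((2 * p + 1 : ℕ) : ℤ) / 2 = p by omega]
    push_cast
    rw [hS]
    simp only [mul_zero, zero_smul, add_zero]

end DihedralRelations

section HyperboloidModel

open Real

/-- The Lorentzian form `v₁ w₁ - (v₀ w₂ + v₂ w₀) / 2` of signature `(2, 1)` on `ℝ³`. It is minus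
the polarised determinant of the symmetric matrix with rows `(v₀, v₁)` and `(v₁, v₂)`, which suits
the upper half-plane better than the diagonal form. -/
noncomputable def lorentzForm : LinearMap.BilinForm ℝ (Fin 3 → ℝ) :=
  Matrix.toBilin' !![0, 0, -1 / 2; 0, 1, 0; -1 / 2, 0, 0]

lemma lorentzForm_apply (v w : Fin 3 → ℝ) :
    lorentzForm v w = v 1 * w 1 - (v 0 * w 2 + v 2 * w 0) / 2 := by
  simp only [lorentzForm, Matrix.toBilin'_apply', Matrix.mulVec, dotProduct, Fin.sum_univ_three,
    Matrix.of_apply, Matrix.cons_val]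
  ring

lemma lorentzForm_comm (v w : Fin 3 → ℝ) : lorentzForm v w = lorentzForm w v := by
  rw [lorentzForm_apply, lorentzForm_apply]
  ring

/-- The upper half-plane as a sheet of the hyperboloid `lorentzForm v v = -1`. The point `z`
corresponds to the binary quadratic form `|s z + t|² / im z` of determinant `1` in `s`, `t`. -/
noncomputable def hyperboloidPoint (z : ℍ) : Fin 3 → ℝ :=
  ![(z.re ^ 2 + z.im ^ 2) / z.im, z.re / z.im, 1 / z.im]

lemma cosh_dist_eq_neg_lorentzForm (z w : ℍ) :
    cosh (dist z w) = -lorentzForm (hyperboloidPoint z) (hyperboloidPoint w) := by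
  have hz := z.im_ne_zero
  have hw := w.im_ne_zero
  rw [UpperHalfPlane.cosh_dist', lorentzForm_apply]
  simp only [hyperboloidPoint, Matrix.cons_val]
  field_simp
  ring

lemma dist_eq_dist_iff_lorentzForm {z w z' w' : ℍ} :
    dist z w = dist z' w' ↔ lorentzForm (hyperboloidPoint z) (hyperboloidPoint w) =
      lorentzForm (hyperboloidPoint z') (hyperboloidPoint w') := by
  rw [← cosh_strictMonoOn.injOn.eq_iff dist_nonneg dist_nonneg, cosh_dist_eq_neg_lorentzForm,
    cosh_dist_eq_neg_lorentzForm, neg_inj]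

lemma lorentzForm_hyperboloidPoint_self (z : ℍ) :
    lorentzForm (hyperboloidPoint z) (hyperboloidPoint z) = -1 := by
  rw [← neg_eq_iff_eq_neg, ← cosh_dist_eq_neg_lorentzForm, dist_self, cosh_zero]

lemma hyperboloidPoint_injective : Function.Injective hyperboloidPoint := by
  intro z w h
  rw [← dist_eq_zero, ← dist_self z, dist_eq_dist_iff_lorentzForm, ← h]

lemma continuous_hyperboloidPoint : Continuous hyperboloidPoint := by
  refine continuous_pi fun i ↦ ?_
  fin_cases i
  · exact ((continuous_re.pow 2).add (continuous_im.pow 2)).div₀ continuous_im im_ne_zero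
  · exact continuous_re.div₀ continuous_im im_ne_zero
  · exact continuous_const.div₀ continuous_im im_ne_zero

lemma exists_hyperboloidPoint_eq {v : Fin 3 → ℝ} (hv : lorentzForm v v = -1) (hpos : 0 < v 2) :
    ∃ z, hyperboloidPoint z = v := by
  rw [lorentzForm_apply] at hv
  refine ⟨⟨⟨v 1 / v 2, 1 / v 2⟩, by positivity⟩, ?_⟩
  ext i
  fin_cases i <;> simp only [hyperboloidPoint, Fin.zero_eta, Fin.mk_one, Fin.reduceFinMk,
    Matrix.cons_val, UpperHalfPlane.re, UpperHalfPlane.im] <;> field_simp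
  linarith

lemma exists_hyperboloidPoint_eq_or_eq_neg {v : Fin 3 → ℝ} (hv : lorentzForm v v = -1) :
    ∃ z, hyperboloidPoint z = v ∨ hyperboloidPoint z = -v := by
  rcases lt_trichotomy (v 2) 0 with hneg | hzero | hpos
  · obtain ⟨z, hz⟩ := exists_hyperboloidPoint_eq (v := -v) (by simpa using hv) (by simpa using hneg)
    exact ⟨z, .inr hz⟩
  · rw [lorentzForm_apply, hzero] at hv
    nlinarith [sq_nonneg (v 1)]
  · obtain ⟨z, hz⟩ := exists_hyperboloidPoint_eq hv hpos
    exact ⟨z, .inl hz⟩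

/-- The signed height of `z` over the geodesic with unit Lorentzian normal `n`: the hyperbolic sine
of the signed distance. -/
noncomputable def side (n : Fin 3 → ℝ) (z : ℍ) : ℝ :=
  lorentzForm n (hyperboloidPoint z)

lemma continuous_side (n : Fin 3 → ℝ) : Continuous (side n) :=
  (lorentzForm n).continuous_of_finiteDimensional.comp continuous_hyperboloidPoint

/-- The reflection of Minkowski space in the plane orthogonal to the unit vector `n`. -/
noncomputable def lorentzReflection {n : Fin 3 → ℝ} (hn : lorentzForm n n = 1) :
    (Fin 3 → ℝ) ≃ₗ[ℝ] (Fin 3 → ℝ) :=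
  Module.reflection (x := n) (f := (2 : ℝ) • lorentzForm n) (by simp [hn])

section Reflections

variable {m n : Fin 3 → ℝ} (hn : lorentzForm n n = 1)

lemma lorentzReflection_apply (v : Fin 3 → ℝ) :
    lorentzReflection hn v = v - (2 * lorentzForm n v) • n := by
  simp [lorentzReflection, Module.reflection_apply]

lemma lorentzForm_lorentzReflection (v w : Fin 3 → ℝ) :
    lorentzForm (lorentzReflection hn v) (lorentzReflection hn w) = lorentzForm v w := by
  simp only [lorentzReflection_apply, map_sub, map_smul, LinearMap.sub_apply, LinearMap.smul_apply,
    smul_eq_mul, hn, lorentzForm_comm v n]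
  ring

lemma lorentzReflection_lorentzReflection (v : Fin 3 → ℝ) :
    lorentzReflection hn (lorentzReflection hn v) = v :=
  Module.involutive_reflection _ v

lemma exists_hyperboloidPoint_eq_lorentzReflection (z : ℍ) :
    ∃ w, hyperboloidPoint w = lorentzReflection hn (hyperboloidPoint z) := by
  obtain ⟨w, hw | hw⟩ := exists_hyperboloidPoint_eq_or_eq_neg
    ((lorentzForm_lorentzReflection hn _ _).trans (lorentzForm_hyperboloidPoint_self z))
  · exact ⟨w, hw⟩
  · have hdist := cosh_dist_eq_neg_lorentzForm z w
    rw [hw, lorentzReflection_apply] at hdist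
    simp only [map_neg, map_sub, map_smul, smul_eq_mul, lorentzForm_hyperboloidPoint_self,
      lorentzForm_comm _ n] at hdist
    nlinarith [cosh_pos (dist z w), sq_nonneg (lorentzForm n (hyperboloidPoint z))]

lemma exists_isometryEquiv_hyperboloidPoint_eq :
    ∃ r : ℍ ≃ᵢ ℍ, ∀ z, hyperboloidPoint (r z) = lorentzReflection hn (hyperboloidPoint z) := by
  choose r hr using exists_hyperboloidPoint_eq_lorentzReflection hn
  have hinvol (z : ℍ) : r (r z) = z :=
    hyperboloidPoint_injective (by rw [hr, hr, lorentzReflection_lorentzReflection])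
  have hisom : Isometry r := Isometry.of_dist_eq fun z w ↦ by
    rw [dist_eq_dist_iff_lorentzForm, hr, hr, lorentzForm_lorentzReflection]
  exact ⟨IsometryEquiv.mk' r r hinvol hisom, hr⟩

/-- The reflection of the hyperbolic plane in the geodesic with unit Lorentzian normal `n`. -/
noncomputable def hyperbolicReflection : ℍ ≃ᵢ ℍ :=
  (exists_isometryEquiv_hyperboloidPoint_eq hn).choose

lemma hyperboloidPoint_hyperbolicReflection (z : ℍ) :
    hyperboloidPoint (hyperbolicReflection hn z) = lorentzReflection hn (hyperboloidPoint z) :=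
  (exists_isometryEquiv_hyperboloidPoint_eq hn).choose_spec z

lemma side_hyperbolicReflection (m : Fin 3 → ℝ) (z : ℍ) :
    side m (hyperbolicReflection hn z) = side m z - 2 * lorentzForm m n * side n z := by
  simp only [side, hyperboloidPoint_hyperbolicReflection, lorentzReflection_apply, map_sub,
    map_smul, smul_eq_mul]
  ring

lemma dist_hyperbolicReflection_lt {z w : ℍ} (hz : side n z < 0) (hw : 0 < side n w) :
    dist (hyperbolicReflection hn z) w < dist z w := by
  have hcosh : cosh (dist (hyperbolicReflection hn z) w) =
      cosh (dist z w) + 2 * side n z * side n w := by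
    simp only [cosh_dist_eq_neg_lorentzForm, hyperboloidPoint_hyperbolicReflection,
      lorentzReflection_apply, map_sub, map_smul, LinearMap.sub_apply, LinearMap.smul_apply,
      smul_eq_mul, side]
    ring
  have hlt : cosh (dist (hyperbolicReflection hn z) w) < cosh (dist z w) := by
    linarith [mul_neg_of_neg_of_pos hz hw]
  simpa only [cosh_lt_cosh, abs_dist] using hlt

lemma hyperbolicReflection_mul_self : hyperbolicReflection hn * hyperbolicReflection hn = 1 := by
  ext1 z
  apply hyperboloidPoint_injective
  simp only [IsometryEquiv.mul_apply, hyperboloidPoint_hyperbolicReflection,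
    lorentzReflection_lorentzReflection, IsometryEquiv.coe_one, id]

lemma hyperboloidPoint_mul_pow (hm : lorentzForm m m = 1) (k : ℕ) (z : ℍ) :
    hyperboloidPoint (((hyperbolicReflection hm * hyperbolicReflection hn) ^ k) z) =
      ((lorentzReflection hm * lorentzReflection hn) ^ k) (hyperboloidPoint z) := by
  induction k with
  | zero => rfl
  | succ k ih =>
    simp only [pow_succ', IsometryEquiv.mul_apply, LinearEquiv.mul_apply,
      hyperboloidPoint_hyperbolicReflection, ih]

lemma hyperbolicReflection_mul_pow_eq_one (hm : lorentzForm m m = 1) {k : ℕ} (hk : 2 ≤ k)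
    (h : lorentzForm m n = -cos (π / k)) :
    (hyperbolicReflection hm * hyperbolicReflection hn) ^ k = 1 := by
  have hpow : (lorentzReflection hm * lorentzReflection hn) ^ k = 1 :=
    reflection_mul_reflection_pow_eq_one _ _ hk (by simp [h]) (by simp [lorentzForm_comm n m, h])
  ext1 z
  apply hyperboloidPoint_injective
  rw [hyperboloidPoint_mul_pow, hpow]
  rfl

end Reflections

end HyperboloidModel

section GramMatrix

open Matrix

section CommRing

variable {ι R V : Type*} [CommRing R] [AddCommGroup V] [Module R V]

/-- The Gram matrix of a family of vectors with respect to an arbitrary bilinear form. -/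
def gramMatrix (B : LinearMap.BilinForm R V) (e : ι → V) : Matrix ι ι R :=
  of fun i j ↦ B (e i) (e j)

variable (B : LinearMap.BilinForm R V) (e : ι → V)

lemma gramMatrix_neg : gramMatrix B (-e) = gramMatrix B e := by
  ext i j
  simp only [gramMatrix, of_apply, Pi.neg_apply, map_neg, LinearMap.neg_apply, neg_neg]

variable [Fintype ι]

lemma gramMatrix_mulVec (c : ι → R) :
    gramMatrix B e *ᵥ c = fun k ↦ B (e k) (∑ i, c i • e i) := by
  ext k
  simp only [gramMatrix, mulVec, dotProduct, of_apply, map_sum, map_smul, smul_eq_mul, mul_comm]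

variable [DecidableEq ι]

lemma apply_sum_adjugate_gramMatrix_smul (t : ι → R) (k : ι) :
    B (e k) (∑ i, ((gramMatrix B e).adjugate *ᵥ t) i • e i) = (gramMatrix B e).det * t k := by
  rw [← congrFun (gramMatrix_mulVec B e _) k, mulVec_mulVec, mul_adjugate, smul_mulVec, one_mulVec,
    Pi.smul_apply, smul_eq_mul]

lemma det_gramMatrix_mul_apply (v : V) {w : V} (hw : w ∈ Submodule.span R (Set.range e)) :
    (gramMatrix B e).det * B v w =
      (fun i ↦ B v (e i)) ⬝ᵥ (gramMatrix B e).adjugate *ᵥ fun j ↦ B (e j) w := by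
  obtain ⟨c, rfl⟩ := (Submodule.mem_span_range_iff_exists_fun R).1 hw
  rw [← gramMatrix_mulVec, mulVec_mulVec, adjugate_mul, smul_mulVec, one_mulVec, dotProduct_smul,
    smul_eq_mul]
  simp only [map_sum, map_smul, smul_eq_mul, dotProduct, mul_comm]

end CommRing

lemma span_eq_top_of_det_gramMatrix_ne_zero {ι K V : Type*} [Field K] [AddCommGroup V] [Module K V]
    [FiniteDimensional K V] [Fintype ι] [DecidableEq ι] {B : LinearMap.BilinForm K V} {e : ι → V}
    (hcard : Fintype.card ι = Module.finrank K V) (hdet : (gramMatrix B e).det ≠ 0) :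
    Submodule.span K (Set.range e) = ⊤ := by
  refine LinearIndependent.span_eq_top_of_card_eq_finrank' ?_ hcard
  refine Fintype.linearIndependent_iff.2 fun c hc ↦ congrFun ?_
  refine eq_zero_of_mulVec_eq_zero hdet ?_
  simpa only [gramMatrix_mulVec, hc, map_zero] using Pi.zero_def.symm

end GramMatrix

section Chambers

open Real Matrix

lemma dist_le_of_cosh_le {z w : ℍ} {R : ℝ} (h : cosh (dist z w) ≤ R) : dist z w ≤ R :=
  (self_le_sinh_iff.2 dist_nonneg).trans ((sinh_lt_cosh _).le.trans h)

/-- The region of the hyperbolic plane on the positive side of every geodesic in the family with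
Lorentzian normals `e`. -/
def chamber {ι : Type*} (e : ι → Fin 3 → ℝ) : Set ℍ :=
  {z | ∀ i, 0 ≤ side (e i) z}

lemma isClosed_chamber {ι : Type*} (e : ι → Fin 3 → ℝ) : IsClosed (chamber e) := by
  simp only [chamber, Set.ofPred_forall]
  exact isClosed_iInter fun i ↦ isClosed_le continuous_const (continuous_side (e i))

variable {e : Fin 3 → Fin 3 → ℝ}

lemma neg_det_mul_cosh_dist (hdet : (gramMatrix lorentzForm e).det ≠ 0) (z w : ℍ) :
    -(gramMatrix lorentzForm e).det * cosh (dist z w) =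
      ∑ i, ∑ j, (gramMatrix lorentzForm e).adjugate i j * (side (e i) z * side (e j) w) := by
  have hspan := span_eq_top_of_det_gramMatrix_ne_zero (by simp) hdet
  rw [cosh_dist_eq_neg_lorentzForm, neg_mul_neg,
    det_gramMatrix_mul_apply lorentzForm e _ (hspan ▸ Submodule.mem_top)]
  simp only [dotProduct, mulVec, Finset.mul_sum, side, lorentzForm_comm (hyperboloidPoint z)]
  exact Finset.sum_congr rfl fun i _ ↦ Finset.sum_congr rfl fun j _ ↦ by ring

lemma adjugate_mul_side_sq_le (hdet : (gramMatrix lorentzForm e).det < 0)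
    (hadj : ∀ i j, 0 ≤ (gramMatrix lorentzForm e).adjugate i j) {z : ℍ} (hz : z ∈ chamber e)
    (i : Fin 3) :
    (gramMatrix lorentzForm e).adjugate i i * side (e i) z ^ 2 ≤
      -(gramMatrix lorentzForm e).det := by
  have hterm (i j : Fin 3) :
      0 ≤ (gramMatrix lorentzForm e).adjugate i j * (side (e i) z * side (e j) z) :=
    mul_nonneg (hadj i j) (mul_nonneg (hz i) (hz j))
  calc (gramMatrix lorentzForm e).adjugate i i * side (e i) z ^ 2
      = (gramMatrix lorentzForm e).adjugate i i * (side (e i) z * side (e i) z) := by rw [sq]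
    _ ≤ ∑ j, (gramMatrix lorentzForm e).adjugate i j * (side (e i) z * side (e j) z) :=
      Finset.single_le_sum (fun j _ ↦ hterm i j) (Finset.mem_univ i)
    _ ≤ ∑ i, ∑ j, (gramMatrix lorentzForm e).adjugate i j * (side (e i) z * side (e j) z) :=
      Finset.single_le_sum (f := fun i ↦ ∑ j, _) (fun i _ ↦ Finset.sum_nonneg fun j _ ↦ hterm i j)
        (Finset.mem_univ i)
    _ = -(gramMatrix lorentzForm e).det := by
      rw [← neg_det_mul_cosh_dist hdet.ne, dist_self, cosh_zero, mul_one]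

lemma isCompact_chamber (hdet : (gramMatrix lorentzForm e).det < 0)
    (hadj : ∀ i j, 0 ≤ (gramMatrix lorentzForm e).adjugate i j)
    (hdiag : ∀ i, 0 < (gramMatrix lorentzForm e).adjugate i i) : IsCompact (chamber e) := by
  set D := -(gramMatrix lorentzForm e).det
  set A := (gramMatrix lorentzForm e).adjugate
  have hD : 0 < D := neg_pos.2 hdet
  refine Metric.isCompact_of_isClosed_isBounded (isClosed_chamber e)
    (Metric.isBounded_closedBall.subset fun z hz ↦ Metric.mem_closedBall.2 (?_ : dist z I ≤
      (∑ i, ∑ j, A i j * (√(D / A i i) * |side (e j) I|)) / D))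
  have hside (i : Fin 3) : side (e i) z ≤ √(D / A i i) := by
    refine le_sqrt_of_sq_le ((le_div_iff₀' (hdiag i)).2 ?_)
    exact adjugate_mul_side_sq_le hdet hadj hz i
  have hside_mul (i j : Fin 3) :
      side (e i) z * side (e j) I ≤ √(D / A i i) * |side (e j) I| :=
    (mul_le_mul_of_nonneg_left (le_abs_self _) (hz i)).trans
      (mul_le_mul_of_nonneg_right (hside i) (abs_nonneg _))
  refine dist_le_of_cosh_le ((le_div_iff₀' hD).2 ?_)
  rw [neg_det_mul_cosh_dist hdet.ne]
  exact Finset.sum_le_sum fun i _ ↦ Finset.sum_le_sum fun j _ ↦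
    mul_le_mul_of_nonneg_left (hside_mul i j) (hadj i j)

lemma exists_forall_side_neg_or_pos (hdet : (gramMatrix lorentzForm e).det < 0)
    (hadj : ∀ i j, 0 ≤ (gramMatrix lorentzForm e).adjugate i j)
    (hdiag : ∀ i, 0 < (gramMatrix lorentzForm e).adjugate i i) :
    ∃ z, (∀ i, side (e i) z < 0) ∨ ∀ i, 0 < side (e i) z := by
  set G := gramMatrix lorentzForm e
  set u := ∑ i, (G.adjugate *ᵥ 1) i • e i with hu
  have hpair (i : Fin 3) : lorentzForm (e i) u = G.det := by
    simpa only [Pi.one_apply, mul_one] using apply_sum_adjugate_gramMatrix_smul lorentzForm e 1 i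
  have hself : lorentzForm u u < 0 := by
    have hcoeff (i : Fin 3) : 0 < (G.adjugate *ᵥ 1) i := by
      rw [mulVec_one]
      exact Finset.sum_pos' (fun j _ ↦ hadj i j) ⟨i, Finset.mem_univ i, hdiag i⟩
    have hself_eq : lorentzForm u u = ∑ i, (G.adjugate *ᵥ 1) i * G.det := by
      nth_rw 1 [hu]
      simp only [map_sum, LinearMap.sum_apply, map_smul, LinearMap.smul_apply, smul_eq_mul, hpair]
    rw [hself_eq]
    exact Finset.sum_neg (fun i _ ↦ mul_neg_of_pos_of_neg (hcoeff i) hdet) Finset.univ_nonempty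
  set c := √(-lorentzForm u u)
  have hc₀ : 0 < c := sqrt_pos.2 (neg_pos.2 hself)
  have hunit : lorentzForm (c⁻¹ • u) (c⁻¹ • u) = -1 := by
    have hsq : c ^ 2 = -lorentzForm u u := sq_sqrt (neg_pos.2 hself).le
    simp only [map_smul, LinearMap.smul_apply, smul_eq_mul]
    field_simp
    linarith
  have hneg : c⁻¹ * G.det < 0 := mul_neg_of_pos_of_neg (inv_pos.2 hc₀) hdet
  obtain ⟨z, hz | hz⟩ := exists_hyperboloidPoint_eq_or_eq_neg hunit
  · exact ⟨z, .inl fun i ↦ by simpa [side, hz, hpair] using hneg⟩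
  · exact ⟨z, .inr fun i ↦ by simpa [side, hz, hpair] using hneg⟩

end Chambers

section HyperbolicTriangles

open Real Matrix

/-- The Gram matrix of the inward unit normals of a hyperbolic triangle with angles `α`, `β`, `γ`,
the angle `α` being that between the sides `0` and `1`. -/
noncomputable def triangleGram (α β γ : ℝ) : Matrix (Fin 3) (Fin 3) ℝ :=
  !![1, -cos α, -cos γ; -cos α, 1, -cos β; -cos γ, -cos β, 1]

variable {α β γ : ℝ}

lemma det_triangleGram (α β γ : ℝ) : (triangleGram α β γ).det =
    (sin α * sin γ) ^ 2 - (cos β + cos α * cos γ) ^ 2 := by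
  simp only [triangleGram, det_fin_three, of_apply, cons_val, mul_pow, sin_sq]
  ring

lemma det_triangleGram_neg (hα : 0 < α) (hβ : 0 ≤ β) (hγ : 0 < γ) (hsum : α + β + γ < π) :
    (triangleGram α β γ).det < 0 := by
  have hsinα : 0 < sin α := sin_pos_of_pos_of_lt_pi hα (by linarith)
  have hsinγ : 0 < sin γ := sin_pos_of_pos_of_lt_pi hγ (by linarith)
  have hcos : cos (π - (α + γ)) < cos β :=
    cos_lt_cos_of_nonneg_of_le_pi hβ (by linarith) (by linarith)
  rw [cos_pi_sub, cos_add] at hcos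
  rw [det_triangleGram, sub_neg]
  exact pow_lt_pow_left₀ (by linarith) (by positivity) two_ne_zero

lemma adjugate_triangleGram (α β γ : ℝ) : (triangleGram α β γ).adjugate =
    !![sin β ^ 2, cos α + cos β * cos γ, cos γ + cos α * cos β;
      cos α + cos β * cos γ, sin γ ^ 2, cos β + cos γ * cos α;
      cos γ + cos α * cos β, cos β + cos γ * cos α, sin α ^ 2] := by
  ext i j
  fin_cases i <;> fin_cases j <;>
    simp only [triangleGram, adjugate_fin_three, sin_sq, Fin.zero_eta, Fin.mk_one, Fin.reduceFinMk,
      of_apply, cons_val] <;>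
    ring

lemma adjugate_triangleGram_nonneg (hα : 0 ≤ cos α) (hβ : 0 ≤ cos β) (hγ : 0 ≤ cos γ)
    (i j : Fin 3) : 0 ≤ (triangleGram α β γ).adjugate i j := by
  rw [adjugate_triangleGram]
  fin_cases i <;> fin_cases j <;>
    simp only [Fin.zero_eta, Fin.mk_one, Fin.reduceFinMk, of_apply, cons_val] <;> positivity

lemma adjugate_triangleGram_self_pos (hα : sin α ≠ 0) (hβ : sin β ≠ 0) (hγ : sin γ ≠ 0)
    (i : Fin 3) : 0 < (triangleGram α β γ).adjugate i i := by
  rw [adjugate_triangleGram]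
  fin_cases i <;> simp only [Fin.zero_eta, Fin.mk_one, Fin.reduceFinMk, of_apply, cons_val] <;>
    positivity

lemma exists_gramMatrix_eq_triangleGram (hα : sin α ≠ 0) (hdet : (triangleGram α β γ).det ≤ 0) :
    ∃ e, gramMatrix lorentzForm e = triangleGram α β γ := by
  set d := (cos β + cos α * cos γ) / sin α with hd
  have hdα : sin α * d = cos β + cos α * cos γ := mul_div_cancel₀ _ hα
  have hd_sq : 0 ≤ d ^ 2 - sin γ ^ 2 := by
    rw [det_triangleGram, ← hdα] at hdet
    nlinarith [sq_pos_of_ne_zero hα]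
  have hsqrt := sq_sqrt hd_sq
  have hsinα := sin_sq_add_cos_sq α
  have hsinγ := sin_sq_add_cos_sq γ
  -- Coordinates in the orthogonal basis `(0, 1, 0)`, `(1, 0, -1)`, `(1, 0, 1)`, of squares
  -- `1`, `1`, `-1`.
  refine ⟨![![0, 1, 0], ![sin α, -cos α, -sin α],
    ![√(d ^ 2 - sin γ ^ 2) - d, -cos γ, √(d ^ 2 - sin γ ^ 2) + d]], ?_⟩
  ext i j
  fin_cases i <;> fin_cases j <;>
    simp only [gramMatrix, triangleGram, lorentzForm_apply, Fin.zero_eta, Fin.mk_one,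
      Fin.reduceFinMk, of_apply, cons_val] <;>
    linarith

lemma exists_hyperbolic_triangle (hα : 0 < α) (hβ : 0 < β) (hγ : 0 < γ) (hα' : α ≤ π / 2)
    (hβ' : β ≤ π / 2) (hγ' : γ ≤ π / 2) (hsum : α + β + γ < π) :
    ∃ e, gramMatrix lorentzForm e = triangleGram α β γ ∧ (∃ x, ∀ i, 0 < side (e i) x) ∧
      IsCompact (chamber e) := by
  have hsin {θ : ℝ} (hθ : 0 < θ) (hθ' : θ ≤ π / 2) : sin θ ≠ 0 :=
    (sin_pos_of_pos_of_lt_pi hθ (by linarith [pi_pos])).ne'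
  have hcos {θ : ℝ} (hθ : 0 < θ) (hθ' : θ ≤ π / 2) : 0 ≤ cos θ :=
    cos_nonneg_of_neg_pi_div_two_le_of_le (by linarith [pi_pos]) hθ'
  have hdet := det_triangleGram_neg hα hβ.le hγ hsum
  have hadj := adjugate_triangleGram_nonneg (hcos hα hα') (hcos hβ hβ') (hcos hγ hγ')
  have hdiag := adjugate_triangleGram_self_pos (hsin hα hα') (hsin hβ hβ') (hsin hγ hγ')
  obtain ⟨e, he⟩ := exists_gramMatrix_eq_triangleGram (hsin hα hα') hdet.le
  obtain ⟨x, hx | hx⟩ := exists_forall_side_neg_or_pos (he ▸ hdet) (he ▸ hadj) (he ▸ hdiag)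
  · have he' := (gramMatrix_neg lorentzForm e).trans he
    refine ⟨-e, he', ⟨x, fun i ↦ ?_⟩, isCompact_chamber (he' ▸ hdet) (he' ▸ hadj) (he' ▸ hdiag)⟩
    simpa [side] using hx i
  · exact ⟨e, he, ⟨x, hx⟩, isCompact_chamber (he ▸ hdet) (he ▸ hadj) (he ▸ hdiag)⟩

end HyperbolicTriangles

section CoxeterFamilies

open Real

/-- A family of unit Lorentzian normals realising a Coxeter matrix: the geodesics `i` and `j` meet
at the angle `π / M i j`. The value `M i j = 0`, which encodes an infinite order, gives the
pairing `-1` of two geodesics with a common endpoint at infinity. -/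
def IsCoxeterFamily {B : Type*} (M : CoxeterMatrix B) (e : B → Fin 3 → ℝ) : Prop :=
  ∀ i j, lorentzForm (e i) (e j) = -cos (π / M i j)

namespace IsCoxeterFamily

variable {B W : Type*} [Group W] {M : CoxeterMatrix B} {e : B → Fin 3 → ℝ}

lemma lorentzForm_self (he : IsCoxeterFamily M e) (i : B) : lorentzForm (e i) (e i) = 1 := by
  rw [he, M.diagonal, Nat.cast_one, div_one, cos_pi, neg_neg]

lemma isLiftable (he : IsCoxeterFamily M e) :
    M.IsLiftable fun i ↦ hyperbolicReflection (he.lorentzForm_self i) := by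
  intro i j
  rcases eq_or_ne i j with rfl | hij
  · rw [M.diagonal, pow_one, hyperbolicReflection_mul_self]
  rcases Nat.eq_zero_or_pos (M i j) with hzero | hpos
  · rw [hzero, pow_zero]
  · have hone := M.off_diagonal i j hij
    exact hyperbolicReflection_mul_pow_eq_one _ _ (by omega) (he i j)

/-- The isometric action of a Coxeter group on the hyperbolic plane in which the simple reflections
act by the reflections in the geodesics of the given family. -/
noncomputable def action (he : IsCoxeterFamily M e) (cs : CoxeterSystem M W) : W →* (ℍ ≃ᵢ ℍ) :=
  cs.lift ⟨_, he.isLiftable⟩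

variable (he : IsCoxeterFamily M e) (cs : CoxeterSystem M W)

lemma action_simple_mul_apply (i : B) (w : W) (z : ℍ) :
    he.action cs (cs.simple i * w) z =
      hyperbolicReflection (he.lorentzForm_self i) (he.action cs w z) := by
  rw [map_mul, action, cs.lift_apply_simple, IsometryEquiv.mul_apply]

lemma isRootFamily_side (z : ℍ) : IsRootFamily cs fun i w ↦ side (e i) (he.action cs w⁻¹ z) := by
  intro i j w
  simp only [mul_inv_rev, cs.inv_simple]
  rw [he.action_simple_mul_apply, side_hyperbolicReflection, he j i, M.symmetric j i]
  ring

variable {x : ℍ} (hx : ∀ i, 0 < side (e i) x)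
include hx

lemma exists_side_action_neg {w : W} (hw : w ≠ 1) : ∃ i, side (e i) (he.action cs w x) < 0 := by
  have hone (i : B) : 0 < side (e i) (he.action cs 1⁻¹ x) := by
    simpa only [inv_one, map_one, IsometryEquiv.coe_one, id] using hx i
  simpa only [inv_inv] using (he.isRootFamily_side cs x).exists_neg hone (inv_ne_one.2 hw)

variable [Finite B]

lemma exists_separated_orbit : ∃ ε > 0, ∀ w, w ≠ 1 → ε ≤ dist (he.action cs w x) x := by
  have hnhds : ∀ᶠ z in nhds x, ∀ i, 0 < side (e i) z := Filter.eventually_all.2 fun i ↦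
    (continuous_side (e i)).continuousAt.eventually (lt_mem_nhds (hx i))
  obtain ⟨ε, hε, hball⟩ := Metric.eventually_nhds_iff.1 hnhds
  refine ⟨ε, hε, fun w hw ↦ not_lt.1 fun hlt ↦ ?_⟩
  obtain ⟨i, hi⟩ := he.exists_side_action_neg cs hx hw
  exact lt_asymm hi (hball hlt i)

lemma action_injective : Function.Injective (he.action cs) := by
  obtain ⟨ε, hε, hsep⟩ := he.exists_separated_orbit cs hx
  exact injective_of_separated_orbit hε hsep

lemma finite_setOf_action_image_inter_nonempty {K : Set ℍ} (hK : IsCompact K) :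
    {w | (he.action cs w '' K ∩ K).Nonempty}.Finite := by
  obtain ⟨ε, hε, hsep⟩ := he.exists_separated_orbit cs hx
  exact finite_setOf_image_inter_nonempty hε hsep hK

lemma exists_action_mem_chamber (z : ℍ) : ∃ w, he.action cs w z ∈ chamber e := by
  obtain ⟨ε, hε, hsep⟩ := he.exists_separated_orbit cs hx
  obtain ⟨w, hmin⟩ := exists_forall_dist_le_of_separated_orbit hε hsep z
  refine ⟨w, fun i ↦ not_lt.1 fun hneg ↦ (hmin (cs.simple i * w)).not_gt ?_⟩
  rw [he.action_simple_mul_apply]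
  exact dist_hyperbolicReflection_lt _ hneg (hx i)

lemma iUnion_action_image_chamber : ⋃ w, he.action cs w '' chamber e = Set.univ := by
  refine Set.eq_univ_of_forall fun z ↦ ?_
  obtain ⟨w, hw⟩ := he.exists_action_mem_chamber cs hx z
  refine Set.mem_iUnion.2 ⟨w⁻¹, _, hw, ?_⟩
  rw [← IsometryEquiv.mul_apply, ← map_mul, inv_mul_cancel, map_one, IsometryEquiv.coe_one, id]

end IsCoxeterFamily

end CoxeterFamilies

section TriangleGroups

variable {a b c : ℕ} (ha : 2 ≤ a) (hb : 2 ≤ b) (hc : 2 ≤ c)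

/-- The Coxeter matrix of the `(a,b,c)` triangle group. -/
def triangleMatrix : CoxeterMatrix (Fin 3) where
  M := !![1, a, c; a, 1, b; c, b, 1]
  isSymm := by
    ext i j
    fin_cases i <;> fin_cases j <;> rfl
  diagonal i := by fin_cases i <;> rfl
  off_diagonal i j hij := by
    fin_cases i <;> fin_cases j <;> simp_all <;> omega

lemma isLiftable_triangleMatrix_iff {G : Type*} [Group G] {g : Fin 3 → G} :
    (triangleMatrix ha hb hc).IsLiftable g ↔ ∀ r ∈ triangleRels a b c, FreeGroup.lift g r = 1 := by
  have hsymm {x y : G} {n : ℕ} (hx : x * x = 1) (hy : y * y = 1) (hxy : (x * y) ^ n = 1) :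
      (y * x) ^ n = 1 := by
    rw [← inv_eq_one, ← inv_pow, mul_inv_rev, inv_eq_of_mul_eq_one_left hx,
      inv_eq_of_mul_eq_one_left hy, hxy]
  simp only [triangleRels, Set.mem_insert_iff, Set.mem_singleton_iff, forall_eq_or_imp, forall_eq,
    map_pow, map_mul, FreeGroup.lift_apply_of, sq]
  constructor
  · intro h
    have h₀ := h 0 0
    have h₁ := h 1 1
    have h₂ := h 2 2
    simp only [CoxeterMatrix.diagonal, pow_one] at h₀ h₁ h₂
    exact ⟨h₀, h₁, h₂, h 0 1, h 1 2, h 2 0⟩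
  · rintro ⟨h₀, h₁, h₂, h₀₁, h₁₂, h₂₀⟩ i j
    have h₁₀ := hsymm h₀ h₁ h₀₁
    have h₂₁ := hsymm h₁ h₂ h₁₂
    have h₀₂ := hsymm h₂ h₀ h₂₀
    fin_cases i <;> fin_cases j <;> simp [triangleMatrix, *]

lemma isLiftable_triangleMatrix_of :
    (triangleMatrix ha hb hc).IsLiftable (PresentedGroup.of (rels := triangleRels a b c)) := by
  have hmk : FreeGroup.lift PresentedGroup.of = PresentedGroup.mk (triangleRels a b c) := by
    ext i
    rw [FreeGroup.lift_apply_of]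
    rfl
  rw [isLiftable_triangleMatrix_iff, hmk]
  exact fun r hr ↦ PresentedGroup.one_of_mem hr

lemma lift_simple_triangleRels :
    ∀ r ∈ triangleRels a b c, FreeGroup.lift (triangleMatrix ha hb hc).simple r = 1 :=
  (isLiftable_triangleMatrix_iff ha hb hc).1
    (triangleMatrix ha hb hc).toCoxeterSystem.simple_mul_simple_pow

/-- The `(a,b,c)` triangle group as a Coxeter group. -/
def triangleCoxeterSystem :
    CoxeterSystem (triangleMatrix ha hb hc) (PresentedGroup (triangleRels a b c)) where
  mulEquiv := MonoidHom.toMulEquiv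
    (PresentedGroup.toGroup (lift_simple_triangleRels ha hb hc))
    ((triangleMatrix ha hb hc).toCoxeterSystem.lift ⟨_, isLiftable_triangleMatrix_of ha hb hc⟩)
    (by
      ext i
      rw [MonoidHom.comp_apply, PresentedGroup.toGroup.of]
      exact CoxeterSystem.lift_apply_simple _ _ i)
    (by
      refine (triangleMatrix ha hb hc).toCoxeterSystem.ext_simple fun i ↦ ?_
      rw [MonoidHom.comp_apply, CoxeterSystem.lift_apply_simple]
      exact PresentedGroup.toGroup.of _)

open Real in
lemma isCoxeterFamily_triangleMatrix {e : Fin 3 → Fin 3 → ℝ}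
    (he : gramMatrix lorentzForm e = triangleGram (π / a) (π / b) (π / c)) :
    IsCoxeterFamily (triangleMatrix ha hb hc) e := by
  intro i j
  refine (congrFun₂ he i j).trans ?_
  fin_cases i <;> fin_cases j <;> simp [triangleGram, triangleMatrix]

open Real in
lemma exists_isCoxeterFamily_triangleMatrix (hyp : (a : ℝ)⁻¹ + (b : ℝ)⁻¹ + (c : ℝ)⁻¹ < 1) :
    ∃ e, IsCoxeterFamily (triangleMatrix ha hb hc) e ∧ (∃ x, ∀ i, 0 < side (e i) x) ∧
      IsCompact (chamber e) := by
  have hpos {n : ℕ} (hn : 2 ≤ n) : 0 < π / n := by positivity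
  have hle {n : ℕ} (hn : 2 ≤ n) : π / n ≤ π / 2 := by
    gcongr
    exact_mod_cast hn
  have hsum : π / a + π / b + π / c < π := by
    simpa only [div_eq_mul_inv, mul_add, mul_one] using mul_lt_mul_of_pos_left hyp pi_pos
  obtain ⟨e, he, hinterior, hcompact⟩ := exists_hyperbolic_triangle (hpos ha) (hpos hb) (hpos hc)
    (hle ha) (hle hb) (hle hc) hsum
  exact ⟨e, isCoxeterFamily_triangleMatrix ha hb hc he, hinterior, hcompact⟩

end TriangleGroups

/-- The hyperbolic triangle group `T_{a,b,c}` (with `2 ≤ a ≤ b ≤ c` and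
`1/a + 1/b + 1/c < 1`), generated by the reflections in the sides of a
hyperbolic triangle with angles `π/a, π/b, π/c`, acts faithfully, properly
discontinuously and cocompactly by isometries on the hyperbolic plane: it is a
cocompact lattice in the isometry group of the hyperbolic plane. -/
theorem triangle_group_cocompact_lattice
    (a b c : ℕ) (ha : 2 ≤ a) (hab : a ≤ b) (hbc : b ≤ c)
    (hyp : (a : ℝ)⁻¹ + (b : ℝ)⁻¹ + (c : ℝ)⁻¹ < 1) :
    ∃ ρ : PresentedGroup (triangleRels a b c) →* (ℍ ≃ᵢ ℍ),
      Function.Injective ρ ∧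
      -- the action is properly discontinuous
      (∀ K : Set ℍ, IsCompact K →
        {g : PresentedGroup (triangleRels a b c) |
          ((ρ g) '' K ∩ K).Nonempty}.Finite) ∧
      -- the action is cocompact
      (∃ K : Set ℍ, IsCompact K ∧
        (⋃ g : PresentedGroup (triangleRels a b c), (ρ g) '' K) = Set.univ) := by
  have hb : 2 ≤ b := ha.trans hab
  have hc : 2 ≤ c := hb.trans hbc
  obtain ⟨e, he, ⟨x, hx⟩, hcompact⟩ := exists_isCoxeterFamily_triangleMatrix ha hb hc hyp
  let cs := triangleCoxeterSystem ha hb hc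
  exact ⟨he.action cs, he.action_injective cs hx,
    fun K hK ↦ he.finite_setOf_action_image_inter_nonempty cs hx hK,
    chamber e, hcompact, he.iUnion_action_image_chamber cs hx⟩
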